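/- Using the quantities of the previous context, for all 0 ≤ i ≤ m and 0 ≤ j ≤ n: M[i,j] = max(M[i-1,j-1]+1, C[i-k,j-k]+k) if L[i,j] > k; M[i,j] = C[i-k,j-k]+k if L[i,j] = k; and M[i,j] = -1 if L[i,j] < k. Consequently max A_{i,j} where A_{i,j} = {C[i-l,j-l] + l·match(i,j,l) : k ≤ l ≤ min(i,j)} equals max(M[i,j], C[i-k,j-k]) whenever min(i,j) ≥ k. -/

import Mathlib

variable {α : Type*} [DecidableEq α]

/-- `IsCSK k X Y L` : there is a common subsequence of `X` and `Y` of total length `L`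
consisting of matching chunks each of length at least `k`, with the chunks at
non-overlapping increasing positions in both strings (0-based starting positions). -/
def IsCSK (k : ℕ) (X Y : List α) (L : ℕ) : Prop :=
  ∃ (t : ℕ) (i j l : ℕ → ℕ),
    (∀ s < t, k ≤ l s) ∧
    (∀ s < t, i s + l s ≤ X.length) ∧
    (∀ s < t, j s + l s ≤ Y.length) ∧
    (∀ s < t, (X.drop (i s)).take (l s) = (Y.drop (j s)).take (l s)) ∧
    (∀ s, s + 1 < t → i s + l s ≤ i (s + 1) ∧ j s + l s ≤ j (s + 1)) ∧
    L = ∑ s ∈ Finset.range t, l s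

/-- The length of a longest common subsequence in at least `k` length substrings. -/
noncomputable def lcsK (k : ℕ) (X Y : List α) : ℕ :=
  sSup {L | IsCSK k X Y L}

/-- `matchF X Y i j l = 1` iff the length-`l` suffixes of `X[1..i]` and `Y[1..j]` are equal. -/
def matchF (X Y : List α) (i j l : ℕ) : ℕ :=
  if (X.take i).drop (i - l) = (Y.take j).drop (j - l) then 1 else 0

/-- `Lsuf X Y i j` : the length of the longest common suffix of `X[1..i]` and `Y[1..j]`. -/
noncomputable def Lsuf (X Y : List α) (i j : ℕ) : ℕ :=
  sSup {l | l ≤ i ∧ l ≤ j ∧ (X.take i).drop (i - l) = (Y.take j).drop (j - l)}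

/-- `Mtab k X Y i j = max_{k ≤ l ≤ L[i,j]} (C[i-l, j-l] + l)` if `L[i,j] ≥ k`, else `-1`. -/
noncomputable def Mtab (k : ℕ) (X Y : List α) (i j : ℕ) : ℤ :=
  if h : k ≤ Lsuf X Y i j then
    (Finset.Icc k (Lsuf X Y i j)).sup' (Finset.nonempty_Icc.mpr h)
      (fun l => (lcsK k (X.take (i - l)) (Y.take (j - l)) : ℤ) + l)
  else -1

theorem suf_eq_iff (X Y : List α) (i j l : ℕ) (hi : i ≤ X.length) (hj : j ≤ Y.length)
    (hli : l ≤ i) (hlj : l ≤ j) :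
    (X.take i).drop (i - l) = (Y.take j).drop (j - l) ↔
      ∀ p < l, X[i - 1 - p]? = Y[j - 1 - p]? := by
  constructor
  · intro h p hp
    have h1 := congrArg (fun Z : List α => Z[l - 1 - p]?) h
    simp only [List.getElem?_drop, List.getElem?_take] at h1
    rw [if_pos (by omega), if_pos (by omega)] at h1
    rwa [show i - l + (l - 1 - p) = i - 1 - p by omega,
      show j - l + (l - 1 - p) = j - 1 - p by omega] at h1
  · intro h
    apply List.ext_getElem?
    intro q
    simp only [List.getElem?_drop, List.getElem?_take]
    by_cases hq : q < l
    · rw [if_pos (by omega), if_pos (by omega)]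
      have h1 := h (l - 1 - q) (by omega)
      rwa [show i - 1 - (l - 1 - q) = i - l + q by omega,
        show j - 1 - (l - 1 - q) = j - l + q by omega] at h1
    · rw [if_neg (by omega), if_neg (by omega)]

theorem le_Lsuf_iff (X Y : List α) (i j l : ℕ) (hi : i ≤ X.length) (hj : j ≤ Y.length) :
    l ≤ Lsuf X Y i j ↔ l ≤ i ∧ l ≤ j ∧ ∀ p < l, X[i - 1 - p]? = Y[j - 1 - p]? := by
  have hb : BddAbove {l | l ≤ i ∧ l ≤ j ∧ (X.take i).drop (i - l) = (Y.take j).drop (j - l)} :=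
    ⟨i, fun a ha => ha.1⟩
  constructor
  · intro h
    have hm : Lsuf X Y i j ∈
        {l | l ≤ i ∧ l ≤ j ∧ (X.take i).drop (i - l) = (Y.take j).drop (j - l)} := by
      apply Nat.sSup_mem _ hb
      refine ⟨0, by omega, by omega, ?_⟩
      rw [suf_eq_iff X Y i j 0 hi hj (by omega) (by omega)]
      intro p hp
      omega
    obtain ⟨h1, h2, h3⟩ := hm
    rw [suf_eq_iff X Y i j _ hi hj h1 h2] at h3
    exact ⟨by omega, by omega, fun p hp => h3 p (by omega)⟩
  · rintro ⟨h1, h2, h3⟩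
    exact le_csSup hb ⟨h1, h2, (suf_eq_iff X Y i j l hi hj h1 h2).2 h3⟩

theorem Lsuf_pred (X Y : List α) (i j : ℕ) (hi : i ≤ X.length) (hj : j ≤ Y.length)
    (h : 1 ≤ Lsuf X Y i j) : Lsuf X Y (i - 1) (j - 1) + 1 = Lsuf X Y i j := by
  have h0 := (le_Lsuf_iff X Y i j 1 hi hj).1 h
  apply le_antisymm
  · rw [le_Lsuf_iff X Y i j _ hi hj]
    obtain ⟨h1, h2, h3⟩ := (le_Lsuf_iff X Y (i - 1) (j - 1) _ (by omega) (by omega)).1 le_rfl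
    refine ⟨by omega, by omega, ?_⟩
    intro p hp
    rcases p with _ | p
    · exact h0.2.2 0 (by omega)
    · have := h3 p (by omega)
      rwa [show i - 1 - 1 - p = i - 1 - (p + 1) by omega,
        show j - 1 - 1 - p = j - 1 - (p + 1) by omega] at this
  · obtain ⟨h1, h2, h3⟩ := (le_Lsuf_iff X Y i j _ hi hj).1 le_rfl
    have : Lsuf X Y i j - 1 ≤ Lsuf X Y (i - 1) (j - 1) := by
      rw [le_Lsuf_iff X Y (i - 1) (j - 1) _ (by omega) (by omega)]
      refine ⟨by omega, by omega, ?_⟩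
      intro p hp
      have := h3 (p + 1) (by omega)
      rwa [show i - 1 - 1 - p = i - 1 - (p + 1) by omega,
        show j - 1 - 1 - p = j - 1 - (p + 1) by omega]
    omega

theorem IsCSK_le (k : ℕ) (X Y : List α) (L : ℕ) (h : IsCSK k X Y L) : L ≤ X.length := by
  obtain ⟨t, i, j, l, h1, h2, h3, h4, h5, rfl⟩ := h
  have key : ∀ s, s < t → ∑ r ∈ Finset.range (s + 1), l r ≤ i s + l s := by
    intro s
    induction s with
    | zero => intro _; simp
    | succ s ih =>
      intro hs
      rw [Finset.sum_range_succ]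
      have := ih (by omega)
      have := (h5 s hs).1
      omega
  rcases t with _ | t
  · simp
  · exact (key t (by omega)).trans (h2 t (by omega))

theorem chunk_take (X : List α) (a p l : ℕ) (h : p + l ≤ a) :
    ((X.take a).drop p).take l = (X.drop p).take l := by
  rw [List.drop_take, List.take_take, min_eq_left (by omega)]

theorem lcsK_mono (k : ℕ) (X Y : List α) (a b c d : ℕ) (hac : a ≤ c) (hbd : b ≤ d) :
    lcsK k (X.take a) (Y.take b) ≤ lcsK k (X.take c) (Y.take d) := by
  apply csSup_le_csSup
  · exact ⟨_, fun L hL => IsCSK_le k _ _ L hL⟩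
  · exact ⟨0, 0, fun _ => 0, fun _ => 0, fun _ => 0, by simp, by simp, by simp, by simp,
      by simp, by simp⟩
  · rintro L ⟨t, i, j, l, h1, h2, h3, h4, h5, h6⟩
    simp only [List.length_take] at h2 h3
    refine ⟨t, i, j, l, h1, ?_, ?_, ?_, h5, h6⟩
    · intro s hs
      have := h2 s hs
      simp only [List.length_take]
      omega
    · intro s hs
      have := h3 s hs
      simp only [List.length_take]
      omega
    · intro s hs
      have e1 := h2 s hs
      have e2 := h3 s hs
      have e3 := h4 s hs
      rw [chunk_take _ _ _ _ (by omega), chunk_take _ _ _ _ (by omega)] at e3 ⊢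
      exact e3

theorem matchF_eq (X Y : List α) (i j l : ℕ) (hi : i ≤ X.length) (hj : j ≤ Y.length)
    (hli : l ≤ i) (hlj : l ≤ j) :
    matchF X Y i j l = if l ≤ Lsuf X Y i j then 1 else 0 := by
  unfold matchF
  have : ((X.take i).drop (i - l) = (Y.take j).drop (j - l)) ↔ l ≤ Lsuf X Y i j := by
    rw [suf_eq_iff X Y i j l hi hj hli hlj, le_Lsuf_iff X Y i j l hi hj]
    tauto
  simp only [this]

theorem le_Mtab (k : ℕ) (X Y : List α) (i j l : ℕ) (h1 : k ≤ l) (h2 : l ≤ Lsuf X Y i j) :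
    (lcsK k (X.take (i - l)) (Y.take (j - l)) : ℤ) + l ≤ Mtab k X Y i j := by
  unfold Mtab
  rw [dif_pos (h1.trans h2)]
  exact Finset.le_sup' (fun l => (lcsK k (X.take (i - l)) (Y.take (j - l)) : ℤ) + l)
    (Finset.mem_Icc.2 ⟨h1, h2⟩)

theorem Mtab_le (k : ℕ) (X Y : List α) (i j : ℕ) (B : ℤ) (h : k ≤ Lsuf X Y i j)
    (hB : ∀ l, k ≤ l → l ≤ Lsuf X Y i j →
      (lcsK k (X.take (i - l)) (Y.take (j - l)) : ℤ) + l ≤ B) :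
    Mtab k X Y i j ≤ B := by
  unfold Mtab
  rw [dif_pos h]
  apply Finset.sup'_le
  intro l hl
  rw [Finset.mem_Icc] at hl
  exact hB l hl.1 hl.2

/-- The full case analysis for `M[i,j]`:
`M[i,j] = max(M[i-1,j-1]+1, C[i-k,j-k]+k)` if `L[i,j] > k`;
`M[i,j] = C[i-k,j-k]+k` if `L[i,j] = k`; `M[i,j] = -1` if `L[i,j] < k`.
Consequently, `max A_{i,j} = max(M[i,j], C[i-k,j-k])` whenever `min i j ≥ k`, where
`A_{i,j} = {C[i-l,j-l] + l·match(i,j,l) : k ≤ l ≤ min i j}`. -/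
theorem Mtab_cases_and_maxA (k : ℕ) (hk : 1 ≤ k) (X Y : List α) :
    ∀ i j : ℕ, ∀ (_ : i ≤ X.length) (_ : j ≤ Y.length),
      (k < Lsuf X Y i j →
        Mtab k X Y i j =
          max (Mtab k X Y (i - 1) (j - 1) + 1)
            ((lcsK k (X.take (i - k)) (Y.take (j - k)) : ℤ) + k)) ∧
      (Lsuf X Y i j = k →
        Mtab k X Y i j = (lcsK k (X.take (i - k)) (Y.take (j - k)) : ℤ) + k) ∧
      (Lsuf X Y i j < k → Mtab k X Y i j = -1) ∧
      (∀ (hki : k ≤ i) (hkj : k ≤ j),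
        (Finset.Icc k (min i j)).sup' (Finset.nonempty_Icc.mpr (le_min hki hkj))
            (fun l => (lcsK k (X.take (i - l)) (Y.take (j - l)) : ℤ) + l * matchF X Y i j l) =
          max (Mtab k X Y i j) (lcsK k (X.take (i - k)) (Y.take (j - k)) : ℤ)) := by
  intro i j hi hj
  refine ⟨?_, ?_, ?_, ?_⟩
  · intro h
    have hp := Lsuf_pred X Y i j hi hj (by omega)
    apply le_antisymm
    · apply Mtab_le _ _ _ _ _ _ h.le
      intro l h1 h2
      rcases h1.eq_or_lt with rfl | h1
      · exact le_max_right _ _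
      · apply le_max_of_le_left
        have := le_Mtab k X Y (i - 1) (j - 1) (l - 1) (by omega) (by omega)
        rw [show i - 1 - (l - 1) = i - l by omega, show j - 1 - (l - 1) = j - l by omega] at this
        omega
    · apply max_le
      · rw [← le_sub_iff_add_le]
        apply Mtab_le _ _ _ _ _ _ (by omega)
        intro l h1 h2
        have := le_Mtab k X Y i j (l + 1) (by omega) (by omega)
        rw [show i - (l + 1) = i - 1 - l by omega, show j - (l + 1) = j - 1 - l by omega] at this
        push_cast at this
        omega
      · exact le_Mtab k X Y i j k le_rfl h.le
  · intro h
    apply le_antisymm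
    · apply Mtab_le _ _ _ _ _ _ h.ge
      intro l h1 h2
      obtain rfl : l = k := by omega
      exact le_rfl
    · exact le_Mtab k X Y i j k le_rfl h.ge
  · intro h
    unfold Mtab
    rw [dif_neg (by omega)]
  · intro hki hkj
    apply le_antisymm
    · apply Finset.sup'_le
      intro l hl
      rw [Finset.mem_Icc, le_min_iff] at hl
      rw [matchF_eq X Y i j l hi hj hl.2.1 hl.2.2]
      split_ifs with h
      · apply le_max_of_le_left
        simpa using le_Mtab k X Y i j l hl.1 h
      · apply le_max_of_le_right
        have := lcsK_mono k X Y (i - l) (j - l) (i - k) (j - k) (by omega) (by omega)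
        simpa using this
    · have key : ∀ l, k ≤ l → l ≤ i → l ≤ j →
          (lcsK k (X.take (i - l)) (Y.take (j - l)) : ℤ) + l * matchF X Y i j l ≤
          (Finset.Icc k (min i j)).sup' (Finset.nonempty_Icc.mpr (le_min hki hkj))
            (fun l => (lcsK k (X.take (i - l)) (Y.take (j - l)) : ℤ) + l * matchF X Y i j l) := by
        intro l h1 h2 h3
        exact Finset.le_sup'
          (fun l => (lcsK k (X.take (i - l)) (Y.take (j - l)) : ℤ) + l * matchF X Y i j l)
          (Finset.mem_Icc.2 ⟨h1, le_min h2 h3⟩)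
      have hk0 : (lcsK k (X.take (i - k)) (Y.take (j - k)) : ℤ) ≤
          (lcsK k (X.take (i - k)) (Y.take (j - k)) : ℤ) + k * matchF X Y i j k :=
        le_add_of_nonneg_right (by positivity)
      have hk1 := hk0.trans (key k le_rfl hki hkj)
      apply max_le _ hk1
      by_cases h : k ≤ Lsuf X Y i j
      · apply Mtab_le _ _ _ _ _ _ h
        intro l h1 h2
        obtain ⟨e1, e2, -⟩ := (le_Lsuf_iff X Y i j l hi hj).1 h2
        have := key l h1 e1 e2
        rw [matchF_eq X Y i j l hi hj e1 e2, if_pos h2] at this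
        simpa using this
      · have : Mtab k X Y i j = -1 := by
          unfold Mtab
          rw [dif_neg h]
        rw [this]
        refine le_trans ?_ hk1
        omega
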